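/- arXiv:1808.10768 — 2 statements merged into one kernel-verified Lean document; each statement's English description precedes it below -/
import Mathlib

section
/- Let n ≥ 1 be an integer and I_n = ∫_T^{T+H} V_y(t)ⁿ dt. Then for any real T and any H > 1, one has I_n = H·δ_n + O((n·y/2)^{n/2}) with an absolute implied constant, where δ_n = 0 if n is odd, and δ_n = ((2k)!/k!)·G^{(k)}(0)/2^{2k} if n = 2k is even. -/
open MeasureTheory Real Complex Filter

/-- The set of primes `p ≤ y`. -/
noncomputable def primesLe (y : ℝ) : Finset ℕ :=
  (Finset.range (⌊y⌋₊ + 1)).filter Nat.Prime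

/-- `V_y(t) = ∑_{p ≤ y} sin(t log p)/√p`. -/
noncomputable def Vy (y t : ℝ) : ℝ :=
  ∑ p ∈ primesLe y, Real.sin (t * Real.log p) / Real.sqrt p

/-- `σ = σ(y) = ∑_{p ≤ y} 1/p`. -/
noncomputable def sigmay (y : ℝ) : ℝ := ∑ p ∈ primesLe y, (1 : ℝ) / p

/-- `J0twoISqrt w = J₀(2i√w) = ∑_{n≥0} wⁿ/(n!)²`, where `J₀` is the Bessel function of
the first kind of order 0. -/
noncomputable def J0twoISqrt (w : ℂ) : ℂ := ∑' n : ℕ, w ^ n / ((n.factorial : ℂ)) ^ 2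

/-- `G(z) = ∏_{p ≤ y} J₀(2i√(z/p))`. -/
noncomputable def Gfun (y : ℝ) (z : ℂ) : ℂ := ∏ p ∈ primesLe y, J0twoISqrt (z / (p : ℂ))

/-- `δ_n = 0` for odd `n`, and `δ_{2k} = ((2k)!/k!)·G^{(k)}(0)/2^{2k}`. -/
noncomputable def deltan (y : ℝ) (n : ℕ) : ℝ :=
  if Even n then
    ((n.factorial : ℝ) / ((n / 2).factorial : ℝ)) * (iteratedDeriv (n / 2) (Gfun y) 0).re / 2 ^ n
  else 0


/-- The integer `∏ p^{α p}`. -/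
noncomputable def AA (S : Finset ℕ) (α : ℕ → ℕ) : ℕ := ∏ p ∈ S, p ^ α p

lemma AA_fact {S : Finset ℕ} (hS : ∀ p ∈ S, p.Prime) (α : ℕ → ℕ) {q : ℕ} (hq : q ∈ S) :
    (AA S α).factorization q = α q := by
  unfold AA
  rw [Nat.factorization_prod (fun p hp => pow_ne_zero _ (hS p hp).ne_zero)]
  rw [Finset.sum_apply']
  rw [Finset.sum_eq_single q]
  · simp [(hS q hq).factorization]
  · intro b hb hbq
    simp [(hS b hb).factorization, hbq]
  · intro h; exact absurd hq h

lemma AA_inj {S : Finset ℕ} (hS : ∀ p ∈ S, p.Prime) {α β : ℕ → ℕ} {j k : ℕ}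
    (hα : α ∈ Finset.piAntidiag S j) (hβ : β ∈ Finset.piAntidiag S k)
    (h : AA S α = AA S β) : α = β := by
  rw [Finset.mem_piAntidiag] at hα hβ
  funext q
  by_cases hq : q ∈ S
  · rw [← AA_fact hS α hq, ← AA_fact hS β hq, h]
  · have h1 : α q = 0 := by
      by_contra h; exact hq (hα.2 q h)
    have h2 : β q = 0 := by
      by_contra h; exact hq (hβ.2 q h)
    rw [h1, h2]

lemma AA_pos {S : Finset ℕ} (hS : ∀ p ∈ S, p.Prime) (α : ℕ → ℕ) : 1 ≤ AA S α :=
  Finset.prod_pos (fun p hp => pow_pos (hS p hp).pos _)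

lemma AA_le {S : Finset ℕ} {M j : ℕ} (hM : ∀ p ∈ S, p ≤ M) {α : ℕ → ℕ}
    (hα : α ∈ Finset.piAntidiag S j) : AA S α ≤ M ^ j := by
  rw [Finset.mem_piAntidiag] at hα
  rw [← hα.1, ← Finset.prod_pow_eq_pow_sum]
  exact Finset.prod_le_prod' (fun p hp => Nat.pow_le_pow_left (hM p hp) _)

lemma sum_mult {S : Finset ℕ} (j : ℕ) :
    ∑ α ∈ Finset.piAntidiag S j, (Nat.multinomial S α : ℝ) = (S.card : ℝ) ^ j := by
  have := Finset.sum_pow_eq_sum_piAntidiag S (fun _ => (1 : ℝ)) j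
  simpa using this.symm

lemma mult_le {S : Finset ℕ} {j : ℕ} {α : ℕ → ℕ}
    (hα : α ∈ Finset.piAntidiag S j) : Nat.multinomial S α ≤ j.factorial := by
  rw [Finset.mem_piAntidiag] at hα
  have := Nat.multinomial_spec S α
  rw [hα.1] at this
  exact Nat.le_of_dvd (Nat.factorial_pos _) ⟨_, by rw [mul_comm]; exact this.symm⟩

lemma sum_mult_sq {S : Finset ℕ} (j : ℕ) :
    ∑ α ∈ Finset.piAntidiag S j, (Nat.multinomial S α : ℝ) ^ 2
      ≤ (j.factorial : ℝ) * (S.card : ℝ) ^ j := by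
  rw [← sum_mult, Finset.mul_sum]
  refine Finset.sum_le_sum (fun α hα => ?_)
  rw [sq]
  refine mul_le_mul_of_nonneg_right ?_ (Nat.cast_nonneg _)
  exact_mod_cast mult_le hα

lemma harm_bound (N : ℕ) : ∑ h ∈ Finset.Icc 1 N, (1 : ℝ) / h ≤ 1 + Real.log N := by
  have := harmonic_le_one_add_log N
  rw [harmonic_eq_sum_Icc] at this
  push_cast at this
  simpa using this

lemma harm_sum {X : Type*} (Q : Finset X) (f : X → ℕ) (N a : ℕ)
    (hf : ∀ x ∈ Q, 1 ≤ f x ∧ f x ≤ N) (hinj : Set.InjOn f Q) (ha : a ≤ N) :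
    ∑ x ∈ Q, (if a = f x then (0 : ℝ) else 1 / |(a : ℝ) - f x|) ≤ 2 * (1 + Real.log N) := by
  have h1 : ∑ x ∈ Q, (if a = f x then (0 : ℝ) else 1 / |(a : ℝ) - f x|)
      = ∑ x ∈ Q with f x < a, (1 : ℝ) / ((a - f x : ℕ) : ℝ)
        + ∑ x ∈ Q with a < f x, (1 : ℝ) / ((f x - a : ℕ) : ℝ) := by
    rw [Finset.sum_filter, Finset.sum_filter, ← Finset.sum_add_distrib]
    refine Finset.sum_congr rfl (fun x _ => ?_)
    rcases lt_trichotomy a (f x) with h | h | h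
    · have h' : (a : ℝ) < f x := by exact_mod_cast h
      rw [if_neg h.ne, if_neg (not_lt.mpr h.le), if_pos h, Nat.cast_sub h.le,
        abs_of_neg (by linarith)]
      simp
    · simp [h]
    · have h' : (f x : ℝ) < a := by exact_mod_cast h
      rw [if_neg h.ne', if_neg (not_lt.mpr h.le), if_pos h, Nat.cast_sub h.le,
        abs_of_pos (by linarith)]
      simp
  have key : ∀ (R : Finset X) (g : X → ℕ), (∀ x ∈ R, 1 ≤ g x ∧ g x ≤ N) → Set.InjOn g R →
      ∑ x ∈ R, (1 : ℝ) / (g x : ℝ) ≤ 1 + Real.log N := by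
    intro R g hg hi
    refine le_trans ?_ (harm_bound N)
    rw [← Finset.sum_image (f := fun h : ℕ => (1 : ℝ) / (h : ℝ)) hi]
    refine Finset.sum_le_sum_of_subset_of_nonneg ?_ (fun _ _ _ => by positivity)
    intro h hh
    rw [Finset.mem_image] at hh
    obtain ⟨x, hx, rfl⟩ := hh
    exact Finset.mem_Icc.mpr (hg x hx)
  have h2 := key (Q.filter (fun x => f x < a)) (fun x => a - f x) (by
    intro x hx
    rw [Finset.mem_filter] at hx
    have := hf x hx.1
    omega) (by
    intro x hx z hz h
    simp only [Finset.coe_filter, Set.mem_ofPred_eq] at hx hz h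
    exact hinj hx.1 hz.1 (by omega))
  have h3 := key (Q.filter (fun x => a < f x)) (fun x => f x - a) (by
    intro x hx
    rw [Finset.mem_filter] at hx
    have := hf x hx.1
    omega) (by
    intro x hx z hz h
    simp only [Finset.coe_filter, Set.mem_ofPred_eq] at hx hz h
    exact hinj hx.1 hz.1 (by omega))
  rw [h1]
  linarith

lemma bilin {X : Type*} (P Q : Finset X) (f : X → ℕ) (N : ℕ) (c : X → ℝ)
    (hP : ∀ x ∈ P, 1 ≤ f x ∧ f x ≤ N) (hQ : ∀ x ∈ Q, 1 ≤ f x ∧ f x ≤ N)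
    (iP : Set.InjOn f P) (iQ : Set.InjOn f Q) :
    ∑ x ∈ P, ∑ z ∈ Q, c x * c z * (if f x = f z then (0 : ℝ) else 1 / |(f x : ℝ) - f z|)
      ≤ 2 * (1 + Real.log N) * (√(∑ x ∈ P, c x ^ 2) * √(∑ x ∈ Q, c x ^ 2)) := by
  set w : X → X → ℝ := fun x z => if f x = f z then (0 : ℝ) else 1 / |(f x : ℝ) - f z| with hw
  have w0 : ∀ x z, 0 ≤ w x z := by
    intro x z; simp only [hw]; split_ifs <;> positivity
  have wsymm : ∀ x z, w x z = w z x := by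
    intro x z; simp only [hw]; rw [abs_sub_comm]; simp only [eq_comm]
  have L0 : 0 ≤ 2 * (1 + Real.log N) := by
    have := Real.log_natCast_nonneg N; positivity
  have e1 : ∑ x ∈ P, ∑ z ∈ Q, c x * c z * w x z
      = ∑ q ∈ P ×ˢ Q, (c q.1 * √(w q.1 q.2)) * (c q.2 * √(w q.1 q.2)) := by
    rw [Finset.sum_product]
    refine Finset.sum_congr rfl (fun x _ => Finset.sum_congr rfl (fun z _ => ?_))
    have := Real.mul_self_sqrt (w0 x z)
    simp only
    linear_combination (- (c x * c z)) * this
  have e2 : ∑ q ∈ P ×ˢ Q, (c q.1 * √(w q.1 q.2)) ^ 2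
      ≤ 2 * (1 + Real.log N) * ∑ x ∈ P, c x ^ 2 := by
    rw [Finset.sum_product, Finset.mul_sum]
    refine Finset.sum_le_sum (fun x hx => ?_)
    simp only [mul_pow, Real.sq_sqrt (w0 _ _)]
    rw [← Finset.mul_sum, mul_comm]
    exact mul_le_mul_of_nonneg_right (harm_sum Q f N (f x) hQ iQ (hP x hx).2) (sq_nonneg _)
  have e3 : ∑ q ∈ P ×ˢ Q, (c q.2 * √(w q.1 q.2)) ^ 2
      ≤ 2 * (1 + Real.log N) * ∑ x ∈ Q, c x ^ 2 := by
    rw [Finset.sum_product_right, Finset.mul_sum]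
    refine Finset.sum_le_sum (fun x hx => ?_)
    simp only [mul_pow, Real.sq_sqrt (w0 _ _)]
    rw [← Finset.mul_sum, mul_comm]
    simp only [fun z => wsymm z x]
    exact mul_le_mul_of_nonneg_right (harm_sum P f N (f x) hP iP (hQ x hx).2) (sq_nonneg _)
  rw [e1]
  refine (Real.sum_mul_le_sqrt_mul_sqrt _ _ _).trans ?_
  refine (mul_le_mul (Real.sqrt_le_sqrt e2) (Real.sqrt_le_sqrt e3) (Real.sqrt_nonneg _)
    (Real.sqrt_nonneg _)).trans (le_of_eq ?_)
  rw [Real.sqrt_mul L0, Real.sqrt_mul L0]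
  have := Real.mul_self_sqrt L0
  linear_combination (√(∑ x ∈ P, c x ^ 2) * √(∑ x ∈ Q, c x ^ 2)) * this

lemma kernel_aux (a b : ℝ) (hb : 0 < b) (hab : b < a) :
    1 / (√a * √b * |Real.log a - Real.log b|) ≤ 2 * (1 / |a - b|) + 1 / (√a * √b) := by
  have ha : 0 < a := hb.trans hab
  have hsa := Real.sqrt_pos.mpr ha
  have hsb := Real.sqrt_pos.mpr hb
  have hl : 0 < Real.log a - Real.log b := by
    have := Real.log_lt_log hb hab; linarith
  rw [abs_of_pos hl, abs_of_pos (sub_pos.mpr hab)]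
  have qa := Real.sq_sqrt ha.le
  have qb := Real.sq_sqrt hb.le
  have hd : 0 < a - b := by linarith
  rcases le_total a (4 * b) with h | h
  · have h1 : (a - b) / a ≤ Real.log a - Real.log b := by
      have := Real.one_sub_inv_le_log_of_pos (div_pos ha hb)
      rw [Real.log_div ha.ne' hb.ne'] at this
      have e : 1 - (a / b)⁻¹ = (a - b) / a := by field_simp
      linarith
    have h2 : √a ≤ 2 * √b := by
      have := Real.sqrt_le_sqrt h
      rw [Real.sqrt_mul (by norm_num)] at this
      have h4 : √(4:ℝ) = 2 := by rw [show (4:ℝ) = 2^2 by norm_num]; exact Real.sqrt_sq (by norm_num)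
      rwa [h4] at this
    have h3 : (a - b) / 2 ≤ √a * √b * (Real.log a - Real.log b) := by
      calc (a - b) / 2 ≤ √a * √b * ((a - b) / a) := by
            rw [mul_div_assoc', le_div_iff₀ ha]
            have : a ≤ 2 * (√a * √b) := by nlinarith
            nlinarith
        _ ≤ _ := by gcongr
    have h4 : 1 / (√a * √b * (Real.log a - Real.log b)) ≤ 1 / ((a - b) / 2) :=
      one_div_le_one_div_of_le (by positivity) h3
    have h5 : 1 / ((a - b) / 2) = 2 * (1 / (a - b)) := by field_simp
    have : 0 < 1 / (√a * √b) := by positivity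
    linarith
  · have h1 : 1 ≤ Real.log a - Real.log b := by
      rw [← Real.log_div ha.ne' hb.ne', Real.le_log_iff_exp_le (div_pos ha hb)]
      have : (4:ℝ) ≤ a / b := by rwa [le_div_iff₀ hb]
      have := Real.exp_one_lt_d9
      linarith
    have h4 : 1 / (√a * √b * (Real.log a - Real.log b)) ≤ 1 / (√a * √b) := by
      apply one_div_le_one_div_of_le (by positivity)
      have : 0 < √a * √b := by positivity
      nlinarith
    have : 0 < 1 / (a - b) := by positivity
    linarith

lemma kernel_bd (a b : ℝ) (ha : 0 < a) (hb : 0 < b) (hab : a ≠ b) :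
    1 / (√a * √b * |Real.log a - Real.log b|) ≤ 2 * (1 / |a - b|) + 1 / (√a * √b) := by
  rcases lt_or_gt_of_ne hab with h | h
  · have := kernel_aux b a ha h
    rwa [mul_comm √b, abs_sub_comm, abs_sub_comm b a] at this
  · exact kernel_aux a b hb h

lemma sqrt_AA {S : Finset ℕ} (α : ℕ → ℕ) :
    ∏ p ∈ S, (1 / √(p : ℝ)) ^ α p = 1 / √(AA S α : ℝ) := by
  unfold AA
  push_cast
  rw [Real.sqrt_prod _ (fun p _ => by positivity), one_div, ← Finset.prod_inv_distrib]
  refine Finset.prod_congr rfl (fun p _ => ?_)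
  rw [one_div, inv_pow, Real.sqrt_eq_rpow, Real.sqrt_eq_rpow, ← Real.rpow_natCast_mul (by positivity), mul_comm, Real.rpow_mul_natCast (by positivity)]


open Classical in
lemma off_diag {S : Finset ℕ} (hS : ∀ p ∈ S, p.Prime) {M : ℕ} (hM : ∀ p ∈ S, p ≤ M)
    (hM1 : 1 ≤ M) {n j k : ℕ} (hjk : j + k = n) :
    ∑ α ∈ Finset.piAntidiag S j, ∑ β ∈ Finset.piAntidiag S k,
      (Nat.multinomial S α : ℝ) * Nat.multinomial S β *
        (if α = β then (0 : ℝ) else 1 / (√(AA S α : ℝ) * √(AA S β : ℝ) *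
          |Real.log (AA S α) - Real.log (AA S β)|))
      ≤ 4 * (1 + n * Real.log M) * (√(j.factorial * k.factorial : ℝ) * √((S.card : ℝ) ^ n))
        + (∑ p ∈ S, 1 / √(p : ℝ)) ^ n := by
  have hA : ∀ l ≤ n, ∀ α ∈ Finset.piAntidiag S l, 1 ≤ AA S α ∧ AA S α ≤ M ^ n := by
    intro l hl α hα
    exact ⟨AA_pos hS α, (AA_le hM hα).trans (Nat.pow_le_pow_right hM1 hl)⟩
  have hI : ∀ l, Set.InjOn (AA S) (Finset.piAntidiag S l : Finset (ℕ → ℕ)) := by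
    intro l α hα β hβ h
    exact AA_inj hS hα hβ h
  have b1 := bilin (Finset.piAntidiag S j) (Finset.piAntidiag S k) (AA S) (M ^ n)
    (fun α => (Nat.multinomial S α : ℝ)) (hA j (by omega)) (hA k (by omega)) (hI j) (hI k)
  have b2 : √(∑ x ∈ Finset.piAntidiag S j, (Nat.multinomial S x : ℝ) ^ 2) *
      √(∑ x ∈ Finset.piAntidiag S k, (Nat.multinomial S x : ℝ) ^ 2)
      ≤ √(j.factorial * k.factorial : ℝ) * √((S.card : ℝ) ^ n) := by
    rw [← Real.sqrt_mul (by positivity), ← Real.sqrt_mul (by positivity)]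
    apply Real.sqrt_le_sqrt
    calc _ ≤ ((j.factorial : ℝ) * (S.card : ℝ) ^ j) * ((k.factorial : ℝ) * (S.card : ℝ) ^ k) := by
          gcongr
          · exact sum_mult_sq j
          · exact sum_mult_sq k
      _ = _ := by rw [← hjk, pow_add]; ring
  have b3 : (∑ p ∈ S, 1 / √(p : ℝ)) ^ n = ∑ α ∈ Finset.piAntidiag S j,
      ∑ β ∈ Finset.piAntidiag S k, (Nat.multinomial S α : ℝ) * Nat.multinomial S β *
        (1 / (√(AA S α : ℝ) * √(AA S β : ℝ))) := by
    rw [← hjk, pow_add, Finset.sum_pow_eq_sum_piAntidiag, Finset.sum_pow_eq_sum_piAntidiag,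
      Finset.sum_mul_sum]
    refine Finset.sum_congr rfl (fun α _ => Finset.sum_congr rfl (fun β _ => ?_))
    rw [sqrt_AA, sqrt_AA]
    rw [one_div, one_div, one_div, mul_inv]
    ring
  have hL : Real.log ((M ^ n : ℕ) : ℝ) = n * Real.log M := by
    push_cast; rw [Real.log_pow]
  rw [hL] at b1
  have hl0 : 0 ≤ Real.log M := Real.log_natCast_nonneg M
  have b4 : 2 * (∑ x ∈ Finset.piAntidiag S j, ∑ z ∈ Finset.piAntidiag S k,
      (Nat.multinomial S x : ℝ) * Nat.multinomial S z *
      (if AA S x = AA S z then (0 : ℝ) else 1 / |(AA S x : ℝ) - AA S z|)) ≤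
      4 * (1 + n * Real.log M) * (√(j.factorial * k.factorial : ℝ) * √((S.card : ℝ) ^ n)) := by
    have : 2 * (1 + n * Real.log M) * (√(∑ x ∈ Finset.piAntidiag S j, (Nat.multinomial S x : ℝ) ^ 2)
       * √(∑ x ∈ Finset.piAntidiag S k, (Nat.multinomial S x : ℝ) ^ 2)) ≤
      2 * (1 + n * Real.log M) * (√(j.factorial * k.factorial : ℝ) * √((S.card : ℝ) ^ n)) :=
      mul_le_mul_of_nonneg_left b2 (by positivity)
    linarith
  refine le_trans ?_ (add_le_add b4 b3.ge)
  rw [Finset.mul_sum, ← Finset.sum_add_distrib]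
  refine Finset.sum_le_sum (fun α hα => ?_)
  rw [Finset.mul_sum, ← Finset.sum_add_distrib]
  refine Finset.sum_le_sum (fun β hβ => ?_)
  have m0 : (0:ℝ) ≤ (Nat.multinomial S α : ℝ) * Nat.multinomial S β := by positivity
  by_cases h : α = β
  · rw [if_pos h, if_pos (by rw [h])]
    simp only [mul_zero, zero_add]
    positivity
  · have h' : AA S α ≠ AA S β := fun e => h (AA_inj hS hα hβ e)
    rw [if_neg h, if_neg h']
    have := kernel_bd (AA S α) (AA S β) (by exact_mod_cast AA_pos hS α)
      (by exact_mod_cast AA_pos hS β) (by exact_mod_cast h')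
    have := mul_le_mul_of_nonneg_left this m0
    linarith

lemma sum_sqrt_choose (n : ℕ) :
    ∑ j ∈ Finset.range (n + 1), √(n.choose j : ℝ) ≤ √((n + 1) * 2 ^ n : ℝ) := by
  have h := Real.sum_mul_le_sqrt_mul_sqrt (Finset.range (n+1)) (fun _ => (1:ℝ))
    (fun j => √(n.choose j : ℝ))
  simp only [one_mul, Real.sq_sqrt (Nat.cast_nonneg _), one_pow, Finset.sum_const,
    Finset.card_range, nsmul_eq_mul, mul_one] at h
  rw [Real.sqrt_mul (by positivity)]
  have e : ∑ j ∈ Finset.range (n + 1), (n.choose j : ℝ) = 2 ^ n := by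
    exact_mod_cast Nat.sum_range_choose n
  rw [e] at h
  exact_mod_cast h

open Classical in
/-- total error bound -/
lemma total_err {S : Finset ℕ} (hS : ∀ p ∈ S, p.Prime) {M : ℕ} (hM : ∀ p ∈ S, p ≤ M)
    (hM1 : 1 ≤ M) (n : ℕ) :
    (1 / 2 : ℝ) ^ n * ∑ j ∈ Finset.range (n + 1), (n.choose j : ℝ) *
     ∑ α ∈ Finset.piAntidiag S j, ∑ β ∈ Finset.piAntidiag S (n - j),
      (Nat.multinomial S α : ℝ) * Nat.multinomial S β *
        (if α = β then (0 : ℝ) else 1 / (√(AA S α : ℝ) * √(AA S β : ℝ) *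
          |Real.log (AA S α) - Real.log (AA S β)|))
      ≤ 4 * (1 + n * Real.log M) * √((n + 1) * n.factorial * ((S.card : ℝ) / 2) ^ n)
        + (∑ p ∈ S, 1 / √(p : ℝ)) ^ n := by
  have hl0 : 0 ≤ Real.log M := Real.log_natCast_nonneg M
  have h1 : ∑ j ∈ Finset.range (n + 1), (n.choose j : ℝ) *
     ∑ α ∈ Finset.piAntidiag S j, ∑ β ∈ Finset.piAntidiag S (n - j),
      (Nat.multinomial S α : ℝ) * Nat.multinomial S β *
        (if α = β then (0 : ℝ) else 1 / (√(AA S α : ℝ) * √(AA S β : ℝ) *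
          |Real.log (AA S α) - Real.log (AA S β)|))
      ≤ ∑ j ∈ Finset.range (n + 1), ((4 * (1 + n * Real.log M) * (√(n.factorial : ℝ) *
          √((S.card : ℝ) ^ n))) * √(n.choose j : ℝ)
        + (n.choose j : ℝ) * (∑ p ∈ S, 1 / √(p : ℝ)) ^ n) := by
    refine Finset.sum_le_sum (fun j hj => ?_)
    have hj' : j ≤ n := by rw [Finset.mem_range] at hj; omega
    have h := mul_le_mul_of_nonneg_left
      (off_diag hS hM hM1 (n := n) (j := j) (k := n - j) (by omega))
      (Nat.cast_nonneg (α := ℝ) (n.choose j))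
    refine h.trans (le_of_eq ?_)
    have e : (n.choose j : ℝ) * √(j.factorial * (n-j).factorial : ℝ)
        = √(n.factorial : ℝ) * √(n.choose j : ℝ) := by
      rw [← Real.sqrt_mul (Nat.cast_nonneg n.factorial)]
      have e2 : (n.factorial : ℝ) * n.choose j
          = (n.choose j : ℝ)^2 * (j.factorial * (n-j).factorial : ℝ) := by
        have : ((n.choose j * j.factorial * (n-j).factorial : ℕ) : ℝ) = n.factorial := by
          rw [Nat.choose_mul_factorial_mul_factorial hj']
        push_cast at this
        rw [← this]; ring
      rw [e2, Real.sqrt_mul (sq_nonneg (n.choose j : ℝ)), Real.sqrt_sq (by positivity)]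
    linear_combination (4 * (1 + n * Real.log M) * √((S.card : ℝ) ^ n)) * e
  rw [Finset.sum_add_distrib, ← Finset.mul_sum, ← Finset.sum_mul] at h1
  have e : ∑ j ∈ Finset.range (n + 1), (n.choose j : ℝ) = 2 ^ n := by
    exact_mod_cast Nat.sum_range_choose n
  rw [e] at h1
  have h2 := mul_le_mul_of_nonneg_left (sum_sqrt_choose n)
    (show 0 ≤ 4 * (1 + n * Real.log M) * (√(n.factorial : ℝ) * √((S.card : ℝ) ^ n)) by positivity)
  have h3 := mul_le_mul_of_nonneg_left (h1.trans (add_le_add_left h2 _))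
    (show (0:ℝ) ≤ (1/2)^n by positivity)
  refine h3.trans (le_of_eq ?_)
  have e5 : (1/2 : ℝ)^n * (√(n.factorial : ℝ) * √((S.card : ℝ) ^ n) * √((n + 1) * 2 ^ n : ℝ))
      = √((n + 1) * n.factorial * ((S.card : ℝ) / 2) ^ n) := by
    rw [← Real.sqrt_mul (by positivity), ← Real.sqrt_mul (by positivity)]
    rw [← Real.sqrt_sq (show (0:ℝ) ≤ (1/2)^n by positivity), ← Real.sqrt_mul (by positivity)]
    congr 1
    have : (2:ℝ)^n * (1/2)^n = 1 := by rw [← mul_pow]; norm_num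
    rw [div_eq_mul_one_div (S.card : ℝ) 2, mul_pow]
    linear_combination ((n.factorial : ℝ) * S.card ^ n * (n+1) * (1/2)^n) * this
  have e6 : (1/2 : ℝ)^n * 2^n = 1 := by rw [← mul_pow]; norm_num
  linear_combination (4 * (1 + n * Real.log M)) * e5 + (∑ p ∈ S, 1 / √(p : ℝ)) ^ n * e6

lemma J_series (p : ℕ) (hp : p ≠ 0) :
    HasFPowerSeriesAt (fun z : ℂ => J0twoISqrt (z / (p : ℂ)))
      (FormalMultilinearSeries.ofScalars ℂ
        (fun n => 1 / ((p : ℂ) ^ n * (n.factorial : ℂ) ^ 2))) 0 := by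
  have hp' : (p : ℂ) ≠ 0 := by exact_mod_cast hp
  set c : ℕ → ℂ := fun n => 1 / ((p : ℂ) ^ n * (n.factorial : ℂ) ^ 2) with hc
  have hr : (FormalMultilinearSeries.ofScalars ℂ c).radius = ⊤ := by
    apply FormalMultilinearSeries.ofScalars_radius_eq_top_of_tendsto
    · refine Filter.Eventually.of_forall (fun n => ?_)
      simp only [hc]
      have : (n.factorial : ℂ) ≠ 0 := by exact_mod_cast n.factorial_ne_zero
      exact one_div_ne_zero (mul_ne_zero (pow_ne_zero _ hp') (pow_ne_zero _ this))
    · have : ∀ n : ℕ, ‖c n.succ‖ / ‖c n‖ = (1 / (p : ℝ)) * ((1 / ((n : ℝ) + 1)) * (1 / ((n : ℝ) + 1))) := by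
        intro n
        simp only [hc, Nat.succ_eq_add_one, Nat.factorial_succ, norm_div, norm_mul, norm_pow,
          Complex.norm_natCast, norm_one]
        have h1 : (p : ℝ) ≠ 0 := by exact_mod_cast hp
        have h2 : (n.factorial : ℝ) ≠ 0 := by exact_mod_cast n.factorial_ne_zero
        have h3 : (n : ℝ) + 1 ≠ 0 := by positivity
        push_cast
        field_simp
        ring
      simp only [this]
      have t := tendsto_one_div_add_atTop_nhds_zero_nat (𝕜 := ℝ)
      simpa using (t.mul t).const_mul (1 / (p : ℝ))
  have h := (FormalMultilinearSeries.ofScalars ℂ c).hasFPowerSeriesOnBall (by rw [hr]; simp)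
  have e : (FormalMultilinearSeries.ofScalars ℂ c).sum = fun z : ℂ => J0twoISqrt (z / (p : ℂ)) := by
    funext z
    rw [← FormalMultilinearSeries.ofScalarsSum, FormalMultilinearSeries.ofScalarsSum_eq_tsum]
    unfold J0twoISqrt
    refine tsum_congr (fun n => ?_)
    simp only [hc, smul_eq_mul, div_pow]
    have : (n.factorial : ℂ) ≠ 0 := by exact_mod_cast n.factorial_ne_zero
    field_simp
  rw [e] at h
  exact h.hasFPowerSeriesAt

/-- Taylor series at 0. -/
noncomputable def tay (f : ℂ → ℂ) : PowerSeries ℂ :=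
  PowerSeries.mk (fun n => iteratedDeriv n f 0 / (n.factorial : ℂ))

lemma tay_mul {f g : ℂ → ℂ} (hf : AnalyticAt ℂ f 0) (hg : AnalyticAt ℂ g 0) :
    tay (f * g) = tay f * tay g := by
  ext n
  simp only [tay, PowerSeries.coeff_mk,
    iteratedDeriv_mul hf.contDiffAt hg.contDiffAt, PowerSeries.coeff_mul,
    Finset.Nat.sum_antidiagonal_eq_sum_range_succ_mk, Nat.succ_eq_add_one, Finset.sum_div]
  refine Finset.sum_congr rfl fun i hi ↦ ?_
  rw [Nat.cast_choose _ (by grind)]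
  field_simp [Nat.factorial_ne_zero]

lemma tay_prod (S : Finset ℕ) (f : ℕ → ℂ → ℂ) (hf : ∀ p ∈ S, AnalyticAt ℂ (f p) 0) :
    AnalyticAt ℂ (∏ p ∈ S, f p) 0 ∧ tay (∏ p ∈ S, f p) = ∏ p ∈ S, tay (f p) := by
  induction S using Finset.induction_on with
  | empty =>
    refine ⟨by rw [Finset.prod_empty]; exact analyticAt_const (v := (1 : ℂ)), ?_⟩
    ext n
    simp only [Finset.prod_empty, tay, PowerSeries.coeff_mk, PowerSeries.coeff_one]
    rw [show (1 : ℂ → ℂ) = fun _ => 1 from rfl, iteratedDeriv_const]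
    split_ifs with h <;> simp [h]
  | insert a s ha ih =>
    have ih := ih (fun p hp => hf p (Finset.mem_insert_of_mem hp))
    have h1 := hf a (Finset.mem_insert_self a s)
    rw [Finset.prod_insert ha, Finset.prod_insert ha]
    exact ⟨h1.mul ih.1, by rw [tay_mul h1 ih.1, ih.2]⟩

lemma tay_J (p : ℕ) (hp : p ≠ 0) : tay (fun z : ℂ => J0twoISqrt (z / (p : ℂ)))
    = PowerSeries.mk (fun n => 1 / ((p : ℂ) ^ n * (n.factorial : ℂ) ^ 2)) := by
  have h := J_series p hp
  have h2 := h.analyticAt.hasFPowerSeriesAt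
  have h3 := h2.eq_formalMultilinearSeries h
  rw [FormalMultilinearSeries.ofScalars_series_eq_iff] at h3
  unfold tay
  rw [h3]

lemma G_deriv {y : ℝ} {S : Finset ℕ} (hSy : primesLe y = S) (hS : ∀ p ∈ S, p.Prime) (k : ℕ) :
    iteratedDeriv k (Gfun y) 0 = k.factorial * ∑ α ∈ Finset.piAntidiag S k,
      ∏ p ∈ S, 1 / ((p : ℂ) ^ α p * ((α p).factorial : ℂ) ^ 2) := by
  have hG : Gfun y = ∏ p ∈ S, fun z : ℂ => J0twoISqrt (z / (p : ℂ)) := by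
    funext z
    rw [Finset.prod_apply, Gfun, hSy]
  have h := (tay_prod S (fun p z => J0twoISqrt (z / (p : ℂ)))
    (fun p hp => (J_series p (hS p hp).ne_zero).analyticAt)).2
  rw [← hG] at h
  have h2 := congrArg (PowerSeries.coeff k) h
  rw [Finset.prod_congr rfl (fun p hp => tay_J p (hS p hp).ne_zero), PowerSeries.coeff_prod] at h2
  simp only [tay, PowerSeries.coeff_mk] at h2
  have hk : (k.factorial : ℂ) ≠ 0 := by exact_mod_cast k.factorial_ne_zero
  rw [div_eq_iff hk] at h2
  rw [h2, mul_comm]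
  congr 1
  refine Finset.sum_bij (fun l _ => (l : ℕ → ℕ)) ?_ ?_ ?_ ?_
  · intro l hl
    rw [Finset.mem_finsuppAntidiag] at hl
    rw [Finset.mem_piAntidiag]
    exact ⟨hl.1, fun i hi => hl.2 (Finsupp.mem_support_iff.mpr hi)⟩
  · intro a _ b _ hab
    exact DFunLike.coe_injective hab
  · intro α hα
    rw [Finset.mem_piAntidiag] at hα
    refine ⟨Finsupp.onFinset S α hα.2, ?_, rfl⟩
    rw [Finset.mem_finsuppAntidiag]
    exact ⟨hα.1, Finsupp.support_onFinset_subset⟩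
  · intro l _
    rfl

lemma G_deriv' {y : ℝ} {S : Finset ℕ} (hSy : primesLe y = S) (hS : ∀ p ∈ S, p.Prime) (k : ℕ) :
    (k.factorial : ℂ) * iteratedDeriv k (Gfun y) 0 = ((∑ α ∈ Finset.piAntidiag S k,
      (Nat.multinomial S α : ℝ) ^ 2 / (AA S α : ℝ) : ℝ) : ℂ) := by
  rw [G_deriv hSy hS]
  push_cast
  rw [Finset.mul_sum, Finset.mul_sum]
  refine Finset.sum_congr rfl (fun α hα => ?_)
  have hs := Nat.multinomial_spec S α
  rw [(Finset.mem_piAntidiag.mp hα).1] at hs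
  rw [← hs]
  have e : ∏ p ∈ S, 1 / ((p : ℂ) ^ α p * ((α p).factorial : ℂ) ^ 2)
      = 1 / ((AA S α : ℂ) * (∏ p ∈ S, ((α p).factorial : ℂ)) ^ 2) := by
    rw [Finset.prod_div_distrib, Finset.prod_mul_distrib, Finset.prod_pow]
    unfold AA
    push_cast
    simp
  rw [e]
  push_cast
  have h1 : (AA S α : ℂ) ≠ 0 := by
    have := AA_pos hS α
    exact_mod_cast (by omega : AA S α ≠ 0)
  have h2 : (∏ p ∈ S, ((α p).factorial : ℂ)) ≠ 0 :=
    Finset.prod_ne_zero_iff.mpr (fun p _ => by exact_mod_cast Nat.factorial_ne_zero _)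
  field_simp

open Classical in
lemma delta_eq {y : ℝ} {S : Finset ℕ} (hSy : primesLe y = S) (hS : ∀ p ∈ S, p.Prime) (n : ℕ) :
    (deltan y n : ℂ) = (1 / (2 * I)) ^ n * ∑ j ∈ Finset.range (n + 1),
      ((n.choose j : ℂ) * (-1) ^ (n - j)) *
     ∑ α ∈ Finset.piAntidiag S j, ∑ β ∈ Finset.piAntidiag S (n - j),
      ((Nat.multinomial S α : ℂ) * Nat.multinomial S β /
        ((√(AA S α : ℝ) : ℝ) * (√(AA S β : ℝ) : ℝ))) * (if α = β then 1 else 0) := by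
  have hdiag : ∀ j, 2 * j ≠ n → j ≤ n → ∑ α ∈ Finset.piAntidiag S j,
     ∑ β ∈ Finset.piAntidiag S (n - j),
      ((Nat.multinomial S α : ℂ) * Nat.multinomial S β /
        ((√(AA S α : ℝ) : ℝ) * (√(AA S β : ℝ) : ℝ))) * (if α = β then 1 else 0) = 0 := by
    intro j hj hjn
    refine Finset.sum_eq_zero (fun α hα => Finset.sum_eq_zero (fun β hβ => ?_))
    rw [if_neg, mul_zero]
    rintro rfl
    rw [Finset.mem_piAntidiag] at hα hβ
    have := hα.1.symm.trans hβ.1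
    omega
  unfold deltan
  split_ifs with hn
  · obtain ⟨k, rfl⟩ := hn
    rw [Finset.sum_eq_single k]
    · have e0 : k + k - k = k := by omega
      have e1 : (k + k) / 2 = k := by omega
      rw [e0, e1]
      have e2 : ∑ α ∈ Finset.piAntidiag S k, ∑ β ∈ Finset.piAntidiag S k,
          ((Nat.multinomial S α : ℂ) * Nat.multinomial S β /
          ((√(AA S α : ℝ) : ℝ) * (√(AA S β : ℝ) : ℝ))) * (if α = β then 1 else 0)
          = ((∑ α ∈ Finset.piAntidiag S k,
            (Nat.multinomial S α : ℝ) ^ 2 / (AA S α : ℝ) : ℝ) : ℂ) := by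
        push_cast
        refine Finset.sum_congr rfl (fun α hα => ?_)
        rw [Finset.sum_eq_single α]
        · rw [if_pos rfl, mul_one, ← Complex.ofReal_mul, Real.mul_self_sqrt (by positivity)]
          push_cast
          ring
        · intro b _ hb
          rw [if_neg (Ne.symm hb), mul_zero]
        · intro h; exact absurd hα h
      rw [e2]
      have hG := G_deriv' hSy hS k
      set Sg := ∑ α ∈ Finset.piAntidiag S k, (Nat.multinomial S α : ℝ) ^ 2 / (AA S α : ℝ)
      have hk : (k.factorial : ℝ) ≠ 0 := by exact_mod_cast k.factorial_ne_zero
      have hkc : (k.factorial : ℂ) ≠ 0 := by exact_mod_cast k.factorial_ne_zero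
      have hG2 : iteratedDeriv k (Gfun y) 0 = ((Sg / k.factorial : ℝ) : ℂ) := by
        push_cast
        rw [eq_div_iff hkc, mul_comm, hG]
      rw [hG2, Complex.ofReal_re]
      have hc : ((k + k).choose k : ℂ) = (k+k).factorial / (k.factorial * k.factorial) := by
        rw [Nat.cast_choose ℂ (by omega : k ≤ k + k), e0]
      rw [hc]
      push_cast
      have hI : (1 / (2 * I)) ^ (k + k) = (-1) ^ k / 2 ^ (k+k) := by
        rw [← two_mul, pow_mul, pow_mul, ← div_pow]
        congr 1
        rw [div_pow, mul_pow, Complex.I_sq]; norm_num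
      rw [hI]
      have : ((-1 : ℂ)^k) * (-1)^k = 1 := by rw [← mul_pow]; norm_num
      field_simp
      linear_combination (-((k+k).factorial * Sg : ℂ)) * this
    · intro j hj hjk
      rw [hdiag j (by omega) (by rw [Finset.mem_range] at hj; omega), mul_zero]
    · intro h; exact absurd (Finset.mem_range.mpr (by omega)) h
  · rw [Finset.sum_eq_zero, mul_zero, Complex.ofReal_zero]
    intro j hj
    rw [hdiag j _ (by rw [Finset.mem_range] at hj; omega), mul_zero]
    rintro rfl
    exact hn (even_two_mul j)

lemma U_pow {S : Finset ℕ} (hS : ∀ p ∈ S, p.Prime) (t : ℝ) (j : ℕ) :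
    (∑ p ∈ S, ((1 / √(p : ℝ) : ℝ) : ℂ) * Complex.exp ((Real.log p : ℝ) * I * (t : ℝ))) ^ j
      = ∑ α ∈ Finset.piAntidiag S j, (Nat.multinomial S α : ℂ) * (((1 / √(AA S α : ℝ) : ℝ) : ℂ)
          * Complex.exp ((Real.log (AA S α) : ℝ) * I * (t : ℝ))) := by
  rw [Finset.sum_pow_eq_sum_piAntidiag]
  refine Finset.sum_congr rfl (fun α _ => ?_)
  congr 1
  simp only [mul_pow]
  rw [Finset.prod_mul_distrib, ← sqrt_AA]
  congr 1
  · push_cast; rfl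
  · simp only [← Complex.exp_nat_mul]
    rw [← Complex.exp_sum]
    congr 1
    unfold AA
    push_cast
    rw [Real.log_prod (fun p hp => pow_ne_zero _ (by exact_mod_cast (hS p hp).ne_zero))]
    push_cast
    rw [Finset.sum_mul, Finset.sum_mul]
    refine Finset.sum_congr rfl (fun p _ => ?_)
    rw [Real.log_pow]
    push_cast
    ring

lemma V_pow {y : ℝ} {S : Finset ℕ} (hSy : primesLe y = S) (hS : ∀ p ∈ S, p.Prime) (t : ℝ)
    (n : ℕ) :
    ((Vy y t ^ n : ℝ) : ℂ) = (1 / (2 * I)) ^ n * ∑ j ∈ Finset.range (n + 1),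
      ((n.choose j : ℂ) * (-1) ^ (n - j)) *
     ∑ α ∈ Finset.piAntidiag S j, ∑ β ∈ Finset.piAntidiag S (n - j),
      ((Nat.multinomial S α : ℂ) * Nat.multinomial S β /
        ((√(AA S α : ℝ) : ℝ) * (√(AA S β : ℝ) : ℝ))) *
        Complex.exp (((Real.log (AA S α) - Real.log (AA S β) : ℝ) * I) * (t : ℝ)) := by
  have hV : ((Vy y t : ℝ) : ℂ) = (1 / (2 * I)) *
      ((∑ p ∈ S, ((1 / √(p : ℝ) : ℝ) : ℂ) * Complex.exp ((Real.log p : ℝ) * I * (t : ℝ)))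
      + -(∑ p ∈ S, ((1 / √(p : ℝ) : ℝ) : ℂ) *
          Complex.exp ((Real.log p : ℝ) * I * ((-t : ℝ) : ℂ)))) := by
    unfold Vy
    rw [hSy, ← sub_eq_add_neg, ← Finset.sum_sub_distrib, Finset.mul_sum]
    push_cast
    refine Finset.sum_congr rfl (fun p _ => ?_)
    rw [Complex.sin, show (t : ℂ) * Complex.log p * I = Complex.log p * I * t by ring,
      show -((t : ℂ) * Complex.log p) * I = Complex.log p * I * (-t) by ring]
    have : (1 / (2 * I)) = -I / 2 := by
      field_simp
      rw [Complex.I_sq]; norm_num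
    rw [this]
    ring
  rw [Complex.ofReal_pow, hV, mul_pow, add_pow]
  congr 1
  refine Finset.sum_congr rfl (fun j _ => ?_)
  rw [neg_pow, U_pow hS, U_pow hS]
  rw [show ∀ a b c d : ℂ, a * (b * c) * d = (d * b) * (a * c) by intros; ring]
  congr 1
  rw [Finset.sum_mul_sum]
  refine Finset.sum_congr rfl (fun α _ => Finset.sum_congr rfl (fun β _ => ?_))
  have : Complex.exp (((Real.log (AA S α) - Real.log (AA S β) : ℝ) * I) * (t : ℝ))
    = Complex.exp ((Real.log (AA S α) : ℝ) * I * (t : ℝ)) *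
      Complex.exp ((Real.log (AA S β) : ℝ) * I * ((-t : ℝ) : ℂ)) := by
    rw [← Complex.exp_add]
    congr 1
    push_cast
    ring
  rw [this]
  push_cast
  rw [one_div, one_div, div_eq_mul_inv, mul_inv]
  ring

lemma int_V {y : ℝ} {S : Finset ℕ} (hSy : primesLe y = S) (hS : ∀ p ∈ S, p.Prime) (T H : ℝ)
    (n : ℕ) :
    ((∫ t in T..(T + H), (Vy y t) ^ n : ℝ) : ℂ) = (1 / (2 * I)) ^ n * ∑ j ∈ Finset.range (n + 1),
      ((n.choose j : ℂ) * (-1) ^ (n - j)) *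
     ∑ α ∈ Finset.piAntidiag S j, ∑ β ∈ Finset.piAntidiag S (n - j),
      ((Nat.multinomial S α : ℂ) * Nat.multinomial S β /
        ((√(AA S α : ℝ) : ℝ) * (√(AA S β : ℝ) : ℝ))) *
        ∫ t in T..(T + H),
          Complex.exp (((Real.log (AA S α) - Real.log (AA S β) : ℝ) * I) * (t : ℝ)) := by
  rw [← intervalIntegral.integral_ofReal]
  simp only [V_pow hSy hS]
  rw [intervalIntegral.integral_const_mul, intervalIntegral.integral_finsetSum]
  · congr 1
    refine Finset.sum_congr rfl (fun j _ => ?_)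
    rw [intervalIntegral.integral_const_mul, intervalIntegral.integral_finsetSum]
    · congr 1
      refine Finset.sum_congr rfl (fun α _ => ?_)
      rw [intervalIntegral.integral_finsetSum]
      · refine Finset.sum_congr rfl (fun β _ => ?_)
        rw [intervalIntegral.integral_const_mul]
      · intro β _
        apply Continuous.intervalIntegrable
        fun_prop
    · intro α _
      apply Continuous.intervalIntegrable
      fun_prop
  · intro j _
    apply Continuous.intervalIntegrable
    fun_prop

lemma int_exp_bd (θ : ℝ) (hθ : θ ≠ 0) (a b : ℝ) :
    ‖∫ t in a..b, Complex.exp ((θ * I) * (t : ℝ))‖ ≤ 2 / |θ| := by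
  have hc : (θ : ℂ) * I ≠ 0 := mul_ne_zero (by exact_mod_cast hθ) I_ne_zero
  rw [integral_exp_mul_complex hc, norm_div, norm_mul, Complex.norm_I, mul_one,
    Complex.norm_real, Real.norm_eq_abs]
  have h1 : ∀ t : ℝ, ‖Complex.exp ((θ * I) * (t : ℝ))‖ = 1 := by
    intro t
    rw [show (θ : ℂ) * I * (t : ℂ) = ((θ * t : ℝ) : ℂ) * I by push_cast; ring]
    exact Complex.norm_exp_ofReal_mul_I _
  gcongr
  refine (norm_sub_le _ _).trans ?_
  rw [h1, h1]; norm_num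

lemma main_err {y : ℝ} {S : Finset ℕ} (hSy : primesLe y = S) (hS : ∀ p ∈ S, p.Prime)
    {M : ℕ} (hM : ∀ p ∈ S, p ≤ M) (hM1 : 1 ≤ M) (T H : ℝ) (n : ℕ) :
    |(∫ t in T..(T + H), (Vy y t) ^ n) - H * deltan y n| ≤
      2 * (4 * (1 + n * Real.log M) * √((n + 1) * n.factorial * ((S.card : ℝ) / 2) ^ n)
        + (∑ p ∈ S, 1 / √(p : ℝ)) ^ n) := by
  classical
  refine le_trans ?_ (mul_le_mul_of_nonneg_left (total_err hS hM hM1 n) (by norm_num))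
  rw [← Real.norm_eq_abs, ← Complex.norm_real]
  rw [Complex.ofReal_sub, Complex.ofReal_mul, int_V hSy hS, delta_eq hSy hS]
  rw [mul_left_comm, ← mul_sub, norm_mul, norm_pow]
  have e1 : ‖(1 / (2 * I) : ℂ)‖ = 1 / 2 := by simp
  rw [e1, mul_left_comm 2]
  refine mul_le_mul_of_nonneg_left ?_ (by positivity)
  rw [Finset.mul_sum, Finset.mul_sum, ← Finset.sum_sub_distrib]
  refine norm_sum_le_of_le _ (fun j _ => ?_)
  rw [mul_left_comm, ← mul_sub, norm_mul, mul_left_comm 2]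
  have e2 : ‖((n.choose j : ℂ) * (-1) ^ (n - j))‖ = n.choose j := by simp
  rw [e2]
  refine mul_le_mul_of_nonneg_left ?_ (by positivity)
  rw [Finset.mul_sum, Finset.mul_sum, ← Finset.sum_sub_distrib]
  refine norm_sum_le_of_le _ (fun α hα => ?_)
  rw [Finset.mul_sum, Finset.mul_sum, ← Finset.sum_sub_distrib]
  refine norm_sum_le_of_le _ (fun β hβ => ?_)
  rw [mul_left_comm, ← mul_sub, norm_mul]
  by_cases h : α = β
  · subst h
    simp
  · have h' : AA S α ≠ AA S β := fun e => h (AA_inj hS hα hβ e)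
    rw [if_neg h, if_neg h, mul_zero, sub_zero]
    have ha : (0 : ℝ) < AA S α := by exact_mod_cast AA_pos hS α
    have hb : (0 : ℝ) < AA S β := by exact_mod_cast AA_pos hS β
    have hθ : Real.log (AA S α) - Real.log (AA S β) ≠ 0 := by
      intro e
      have := Real.log_injOn_pos (Set.mem_Ioi.mpr ha) (Set.mem_Ioi.mpr hb) (by linarith)
      exact h' (by exact_mod_cast this)
    have hb := int_exp_bd _ hθ T (T + H)
    refine (mul_le_mul_of_nonneg_left hb (norm_nonneg _)).trans (le_of_eq ?_)
    rw [norm_div, norm_mul, norm_mul, Complex.norm_natCast, Complex.norm_natCast,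
      Complex.norm_real, Complex.norm_real, Real.norm_of_nonneg (Real.sqrt_nonneg _),
      Real.norm_of_nonneg (Real.sqrt_nonneg _)]
    have := abs_pos.mpr hθ
    field_simp

lemma fact_bd (n : ℕ) (hn : 1 ≤ n) : n.factorial * 2 ^ n ≤ 2 * n ^ n := by
  induction n, hn using Nat.le_induction with
  | base => norm_num
  | succ n hn ih =>
    have h : 2 * n ^ n ≤ (n + 1) ^ n := by
      have h1 : n ^ n + n * n ^ (n - 1) ≤ (n + 1) ^ n := by
        rw [add_pow]
        simp only [one_pow, mul_one]
        rw [Finset.sum_range_succ]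
        have : n ^ (n-1) * (n.choose (n-1)) ≤ ∑ x ∈ Finset.range n, n ^ x * n.choose x :=
          Finset.single_le_sum (f := fun x => n ^ x * n.choose x) (fun _ _ => Nat.zero_le _)
            (Finset.mem_range.mpr (by omega))
        have e : n.choose (n-1) = n := by
          rw [Nat.choose_symm_of_eq_add (by omega : n = (n - 1) + 1)]; simp
        rw [e] at this
        simp
        linarith [mul_comm n (n^(n-1))]
      have : n * n ^ (n - 1) = n ^ n := by
        rw [← pow_succ']; congr 1; omega
      linarith
    calc (n+1).factorial * 2 ^ (n+1) = 2 * (n+1) * (n.factorial * 2^n) := by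
          rw [Nat.factorial_succ, pow_succ]; ring
      _ ≤ 2 * (n+1) * (2 * n ^ n) := by gcongr
      _ ≤ 2 * (n + 1) * (n+1)^n := by gcongr
      _ = _ := by rw [pow_succ]; ring

lemma poly_bd (n : ℕ) : n ^ 2 * (n + 1) ≤ 8 * 2 ^ n := by
  by_cases h : n < 4
  · interval_cases n <;> norm_num
  · push Not at h
    induction n, h using Nat.le_induction with
    | base => norm_num
    | succ n hn ih =>
      have h1 : (n + 1) * (n + 2) ≤ 2 * n ^ 2 := by nlinarith
      calc (n + 1) ^ 2 * (n + 1 + 1) = (n + 1) * ((n + 1) * (n + 2)) := by ring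
        _ ≤ (n + 1) * (2 * n ^ 2) := by gcongr
        _ = 2 * (n ^ 2 * (n + 1)) := by ring
        _ ≤ 2 * (8 * 2 ^ n) := by gcongr
        _ = _ := by ring

lemma card_bd1 (y : ℝ) (hy : 2 < y) : ((primesLe y).card : ℝ) ≤ y := by
  have h : primesLe y ⊆ Finset.Icc 1 ⌊y⌋₊ := by
    intro p hp
    simp only [primesLe, Finset.mem_filter, Finset.mem_range] at hp
    rw [Finset.mem_Icc]
    exact ⟨hp.2.one_le, by omega⟩
  have h2 := Finset.card_le_card h
  rw [Nat.card_Icc, Nat.add_sub_cancel] at h2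
  exact le_trans (by exact_mod_cast h2) (Nat.floor_le (by linarith))

lemma card_bd2 (y : ℝ) (hy : 2 < y) : ((primesLe y).card : ℝ) * Real.log y ≤ 5 * y := by
  have e : (primesLe y).card = Nat.primeCounting ⌊y⌋₊ := by
    rw [Nat.primeCounting, Nat.primeCounting', Nat.count_eq_card_filter_range]
    rfl
  have h := Chebyshev.pi_le_log4_mul_div (x := y) (by linarith)
  rw [← e, Real.log_sqrt (by linarith)] at h
  have hl : 0 < Real.log y := Real.log_pos (by linarith)
  have h4 : Real.log 4 ≤ 1.4 := by
    rw [show (4:ℝ) = 2 ^ 2 by norm_num, Real.log_pow]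
    have := Real.log_two_lt_d9
    push_cast; linarith
  have hs : √y * Real.log y ≤ 2 * y := by
    have h1 := Real.log_le_sub_one_of_pos (Real.sqrt_pos.mpr (by linarith : 0 < y))
    rw [Real.log_sqrt (by linarith)] at h1
    have h2 := Real.mul_self_sqrt (by linarith : 0 ≤ y)
    have h3 := Real.sqrt_nonneg y
    nlinarith
  have h5 := mul_le_mul_of_nonneg_right h hl.le
  have h6 : (Real.log 4 * y / (Real.log y / 2) + √y) * Real.log y
     = 2 * Real.log 4 * y + √y * Real.log y := by field_simp
  rw [h6] at h5
  nlinarith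

lemma sum_inv_sqrt (m : ℕ) : ∑ p ∈ Finset.Icc 1 m, 1 / √(p : ℝ) ≤ 2 * √(m : ℝ) := by
  induction m with
  | zero => simp
  | succ m ih =>
    rw [Finset.sum_Icc_succ_top (by omega)]
    push_cast
    have h1 : 0 < √((m : ℝ) + 1) := Real.sqrt_pos.mpr (by positivity)
    have h2 := Real.sqrt_nonneg (m : ℝ)
    have h3 := Real.mul_self_sqrt (show (0:ℝ) ≤ (m : ℝ) + 1 by positivity)
    have h4 := Real.mul_self_sqrt (show (0:ℝ) ≤ (m : ℝ) by positivity)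
    have h5 : 1 / √((m : ℝ) + 1) ≤ 2 * √((m : ℝ) + 1) - 2 * √(m : ℝ) := by
      rw [div_le_iff₀ h1]
      nlinarith [sq_nonneg (√((m : ℝ) + 1) - √(m : ℝ))]
    linarith

lemma sum_primes_bd (y : ℝ) (hy : 2 < y) : ∑ p ∈ primesLe y, 1 / √(p : ℝ) ≤ 2 * √y := by
  have h : primesLe y ⊆ Finset.Icc 1 ⌊y⌋₊ := by
    intro p hp
    simp only [primesLe, Finset.mem_filter, Finset.mem_range] at hp
    rw [Finset.mem_Icc]
    exact ⟨hp.2.one_le, by omega⟩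
  refine (Finset.sum_le_sum_of_subset_of_nonneg h (fun _ _ _ => by positivity)).trans
    ((sum_inv_sqrt _).trans ?_)
  have := Real.sqrt_le_sqrt (Nat.floor_le (by linarith : 0 ≤ y))
  linarith

lemma prime_of_mem {y : ℝ} : ∀ p ∈ primesLe y, p.Prime := by
  intro p hp
  simp only [primesLe, Finset.mem_filter] at hp
  exact hp.2

lemma case_one (y : ℝ) (hy : 2 < y) (T H : ℝ) :
    |∫ t in T..(T + H), Vy y t| ≤ 8 * √y := by
  unfold Vy
  rw [intervalIntegral.integral_finsetSum]
  · refine (Finset.abs_sum_le_sum_abs _ _).trans ?_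
    have hs := sum_primes_bd y hy
    have : ∑ p ∈ primesLe y, |∫ t in T..(T + H), Real.sin (t * Real.log p) / √(p : ℝ)|
        ≤ ∑ p ∈ primesLe y, 4 * (1 / √(p : ℝ)) := by
      refine Finset.sum_le_sum (fun p hp => ?_)
      have hp2 : (2 : ℝ) ≤ p := by exact_mod_cast (prime_of_mem p hp).two_le
      have hl : 1 / 2 ≤ Real.log p := by
        have := Real.log_le_log (by norm_num) hp2
        have := Real.log_two_gt_d9
        linarith
      rw [intervalIntegral.integral_div, intervalIntegral.integral_comp_mul_right (f := Real.sin)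
        (by linarith : Real.log p ≠ 0), integral_sin, smul_eq_mul, abs_div, abs_mul, abs_inv,
        abs_of_pos (by linarith : 0 < Real.log p), abs_of_nonneg (Real.sqrt_nonneg _),
        div_eq_mul_one_div]
      refine mul_le_mul_of_nonneg_right ?_ (by positivity)
      have h1 : (Real.log p)⁻¹ ≤ 2 := by
        rw [inv_le_comm₀ (by linarith) (by norm_num)]; linarith
      have h2 : |Real.cos (T * Real.log p) - Real.cos ((T + H) * Real.log p)| ≤ 2 := by
        have a1 := Real.neg_one_le_cos (T * Real.log p)
        have a2 := Real.cos_le_one (T * Real.log p)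
        have a3 := Real.neg_one_le_cos ((T + H) * Real.log p)
        have a4 := Real.cos_le_one ((T + H) * Real.log p)
        rw [abs_le]; constructor <;> linarith
      calc _ ≤ (2:ℝ) * 2 := mul_le_mul h1 h2 (abs_nonneg _) (by norm_num)
        _ = 4 := by norm_num
    rw [← Finset.mul_sum] at this
    linarith
  · intro p _
    apply Continuous.intervalIntegrable
    fun_prop

lemma eight_bd (n : ℕ) (hn : 1 ≤ n) : (8 : ℝ) ^ n ≤ 4096 ^ 2 * (n : ℝ) ^ n := by
  by_cases h : 8 ≤ n
  · have h1 : (8 : ℝ) ^ n ≤ (n : ℝ) ^ n := by gcongr; exact_mod_cast h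
    have : (0:ℝ) ≤ (n : ℝ) ^ n := by positivity
    linarith
  · push Not at h
    have h1 : (8 : ℝ) ^ n ≤ 8 ^ 8 := pow_le_pow_right₀ (by norm_num) (by omega)
    have h2 : (1 : ℝ) ≤ (n : ℝ) ^ n := one_le_pow₀ (by exact_mod_cast hn)
    norm_num at h1
    nlinarith

lemma first_bd (y : ℝ) (hy : 2 < y) (n : ℕ) (hn : 2 ≤ n) :
    (1 + n * Real.log ⌊y⌋₊) * √((n + 1) * n.factorial * (((primesLe y).card : ℝ) / 2) ^ n)
      ≤ 60 * √((n * y / 2 : ℝ) ^ n) := by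
  set c : ℝ := ((primesLe y).card : ℝ) with hc
  have c0 : 0 ≤ c := by positivity
  have hc1 : c ≤ y := card_bd1 y hy
  have hc2 : c * Real.log y ≤ 5 * y := card_bd2 y hy
  have hL : 1 / 2 ≤ Real.log y := by
    have := Real.log_le_log (by norm_num) hy.le
    have := Real.log_two_gt_d9
    linarith
  have hM : Real.log ⌊y⌋₊ ≤ Real.log y :=
    Real.log_le_log (by exact_mod_cast Nat.floor_pos.mpr (by linarith))
      (Nat.floor_le (by linarith))
  have hn' : (2 : ℝ) ≤ n := by exact_mod_cast hn
  have h1 : 1 + n * Real.log ⌊y⌋₊ ≤ 3 * n * Real.log y := by nlinarith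
  have key : (3 * n * Real.log y) ^ 2 * ((n + 1) * n.factorial * (c / 2) ^ n)
      ≤ 60 ^ 2 * (n * y / 2 : ℝ) ^ n := by
    have a1 : Real.log y ^ 2 * c ^ n ≤ 25 * y ^ n := by
      obtain ⟨m, rfl⟩ := Nat.exists_eq_add_of_le hn
      rw [pow_add, pow_add]
      calc Real.log y ^ 2 * (c ^ 2 * c ^ m) = (c * Real.log y) ^ 2 * c ^ m := by ring
        _ ≤ (5 * y) ^ 2 * y ^ m := by gcongr
        _ = _ := by ring
    have a2 : (n.factorial : ℝ) * 2 ^ n ≤ 2 * (n : ℝ) ^ n := by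
      exact_mod_cast fact_bd n (by omega)
    have a3 : (n : ℝ) ^ 2 * (n + 1) ≤ 8 * 2 ^ n := by exact_mod_cast poly_bd n
    have a4 : (n : ℝ) ^ 2 * (n + 1) * n.factorial ≤ 16 * (n : ℝ) ^ n := by
      have := mul_le_mul_of_nonneg_right a3 (Nat.cast_nonneg (α := ℝ) n.factorial)
      linarith
    have a5 := mul_le_mul a4 a1 (by positivity) (by positivity)
    rw [div_pow, div_pow, mul_pow (n : ℝ) y]
    calc (3 * n * Real.log y) ^ 2 * ((n + 1) * n.factorial * (c ^ n / 2 ^ n))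
        = 9 * ((n : ℝ) ^ 2 * (n + 1) * n.factorial * (Real.log y ^ 2 * c ^ n)) / 2 ^ n := by ring
      _ ≤ 9 * (16 * (n : ℝ) ^ n * (25 * y ^ n)) / 2 ^ n := by gcongr
      _ = _ := by ring
  calc _ ≤ (3 * n * Real.log y) * √((n + 1) * n.factorial * (c / 2) ^ n) := by gcongr
    _ = √((3 * n * Real.log y) ^ 2 * ((n + 1) * n.factorial * (c / 2) ^ n)) := by
      rw [Real.sqrt_mul (sq_nonneg _), Real.sqrt_sq (by positivity)]
    _ ≤ √(60 ^ 2 * (n * y / 2 : ℝ) ^ n) := Real.sqrt_le_sqrt key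
    _ = _ := by
      rw [Real.sqrt_mul (by norm_num), Real.sqrt_sq (by norm_num)]

lemma second_bd (y : ℝ) (hy : 2 < y) (n : ℕ) (hn : 1 ≤ n) :
    (∑ p ∈ primesLe y, 1 / √(p : ℝ)) ^ n ≤ 4096 * √((n * y / 2 : ℝ) ^ n) := by
  have y0 : 0 ≤ y := by linarith
  calc _ ≤ (2 * √y) ^ n := by
        have := sum_primes_bd y hy
        have : 0 ≤ ∑ p ∈ primesLe y, 1 / √(p : ℝ) := Finset.sum_nonneg (fun _ _ => by positivity)
        gcongr
    _ = √((4 * y) ^ n) := by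
      rw [← Real.sqrt_sq (show 0 ≤ (2 * √y) ^ n by positivity), ← pow_mul, mul_comm n 2, pow_mul,
        mul_pow, Real.sq_sqrt y0]
      norm_num
    _ ≤ √(4096 ^ 2 * (n * y / 2 : ℝ) ^ n) := by
      apply Real.sqrt_le_sqrt
      have h := mul_le_mul_of_nonneg_right (eight_bd n hn) (show 0 ≤ (y / 2) ^ n by positivity)
      calc (4 * y) ^ n = 8 ^ n * (y / 2) ^ n := by rw [← mul_pow]; ring
        _ ≤ _ := h
        _ = _ := by rw [mul_assoc, ← mul_pow]; ring
    _ = _ := by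
      rw [Real.sqrt_mul (by norm_num), Real.sqrt_sq (by norm_num)]

/-- **Lemma 1** (Ivić–Korolev). For `n ≥ 1`, any real `T` and any `H > 1`,
`∫_T^{T+H} V_yⁿ(t) dt = H δ_n + O((ny/2)^{n/2})` with an absolute `O`-constant. -/
theorem moments_of_Vy :
    ∃ C : ℝ, 0 < C ∧ ∀ y : ℝ, 2 < y → ∀ n : ℕ, 1 ≤ n → ∀ T H : ℝ, 1 < H →
      |(∫ t in T..(T + H), (Vy y t) ^ n) - H * deltan y n|
        ≤ C * ((n * y / 2 : ℝ) ^ ((n : ℝ) / 2)) := by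
  refine ⟨10000, by norm_num, ?_⟩
  intro y hy n hn T H _
  have e : (n * y / 2 : ℝ) ^ ((n : ℝ) / 2) = √((n * y / 2 : ℝ) ^ n) := by
    rw [Real.sqrt_eq_rpow, ← Real.rpow_natCast, ← Real.rpow_mul (by positivity)]
    congr 1
    ring
  rw [e]
  rcases Nat.lt_or_ge 1 n with h | h
  · have hm := main_err (y := y) rfl prime_of_mem (M := ⌊y⌋₊) (by
      intro p hp
      simp only [primesLe, Finset.mem_filter, Finset.mem_range] at hp
      omega) (Nat.floor_pos.mpr (by linarith)) T H n
    have h1 := first_bd y hy n h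
    have h2 := second_bd y hy n hn
    have h3 : 0 ≤ √((n * y / 2 : ℝ) ^ n) := Real.sqrt_nonneg _
    linarith
  · obtain rfl : n = 1 := by omega
    have h1 := case_one y hy T H
    have hd : deltan y 1 = 0 := by simp [deltan]
    rw [hd]
    simp only [pow_one, mul_zero, sub_zero, Nat.cast_one, one_mul]
    refine h1.trans ?_
    have h2 : √y ≤ 2 * √(y / 2) := by
      rw [show (2:ℝ) * √(y/2) = √(2 ^ 2 * (y / 2)) by
        rw [Real.sqrt_mul (by norm_num), Real.sqrt_sq (by norm_num)]]
      apply Real.sqrt_le_sqrt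
      linarith
    have := Real.sqrt_nonneg (y / 2)
    linarith
end

section
/- For every real u and every ω > 0 one has |sgn(u) − F_ω(u)| ≤ K(ω·u); that is, sgn(u) = F_ω(u) + θ·K(ωu) with |θ| ≤ 1. -/
open MeasureTheory Real Complex Filter

/-- The Fejér kernel `K(x) = (sin(πx)/(πx))²`, with `K(0) = 1`. -/
noncomputable def Kf (x : ℝ) : ℝ := if x = 0 then 1 else (Real.sin (π * x) / (π * x)) ^ 2

/-- The function `g(t) = 2(π⁻¹ sgn(t) + (1-|t|) cot(πt))` for `|t| < 1`, and `g(t) = 0`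
for `|t| ≥ 1` (in particular `g(±1) = 0`). -/
noncomputable def gfun (t : ℝ) : ℝ :=
  if |t| < 1 then
    2 * (π⁻¹ * Real.sign t + (1 - |t|) * (Real.cos (π * t) / Real.sin (π * t)))
  else 0

/-- `F_ω(u) = (1/ω) ∫_0^ω g(t/ω) sin(2πut) dt`. -/
noncomputable def Fom (ω u : ℝ) : ℝ :=
  (1 / ω) * ∫ t in (0 : ℝ)..ω, gfun (t / ω) * Real.sin (2 * π * u * t)


noncomputable def GG (x : ℝ) : ℝ := ∫ t in (0 : ℝ)..1, gfun t * Real.sin (2 * π * x * t)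

lemma Fom_eq (ω u : ℝ) (h : 0 < ω) : Fom ω u = GG (ω * u) := by
  unfold Fom GG
  have h0 : ω ≠ 0 := h.ne'
  have := intervalIntegral.integral_comp_div (a := 0) (b := ω)
    (fun t => gfun t * Real.sin (2 * π * (ω * u) * t)) h0
  rw [zero_div, div_self h0] at this
  rw [one_div, inv_mul_eq_iff_eq_mul₀ h0]
  refine Eq.trans ?_ this
  congr 1
  ext t
  congr 2
  field_simp

lemma GG_neg (x : ℝ) : GG (-x) = -GG x := by
  unfold GG
  rw [← intervalIntegral.integral_neg]
  congr 1
  ext t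
  rw [← mul_neg, ← Real.sin_neg]
  congr 2
  ring

lemma gfun_eq {t : ℝ} (h0 : 0 < t) (h1 : t ≤ 1) :
    gfun t = if t < 1 then 2 * (π⁻¹ + (1 - t) * (Real.cos (π * t) / Real.sin (π * t))) else 0 := by
  unfold gfun
  rw [abs_of_pos h0, Real.sign_of_pos h0, mul_one]

lemma sin_lower {t : ℝ} (h0 : 0 < t) (h1 : t < 1) : 2 * t * (1 - t) ≤ Real.sin (π * t) := by
  have hp := Real.pi_pos
  rcases le_total t (1/2) with h | h
  · have := Real.mul_le_sin (x := π * t) (by positivity) (by nlinarith)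
    have e : 2 / π * (π * t) = 2 * t := by field_simp
    nlinarith
  · have := Real.mul_le_sin (x := π * (1 - t)) (mul_nonneg hp.le (by linarith)) (by nlinarith)
    have e : 2 / π * (π * (1 - t)) = 2 * (1 - t) := by field_simp
    have e2 : Real.sin (π * (1 - t)) = Real.sin (π * t) := by
      rw [show π * (1 - t) = π - π * t by ring, Real.sin_pi_sub]
    nlinarith

lemma gfun_bound (c : ℝ) {t : ℝ} (h0 : 0 < t) (h1 : t ≤ 1) :
    |gfun t * Real.sin (c * t)| ≤ 2 * π⁻¹ + |c| := by
  have hp := Real.pi_pos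
  rw [gfun_eq h0 h1]
  split_ifs with h
  · have hs := sin_lower h0 h
    have hpos : 0 < Real.sin (π * t) := lt_of_lt_of_le (by nlinarith) hs
    have hb : |(1 - t) * (Real.cos (π * t) / Real.sin (π * t))| * t ≤ 1 / 2 := by
      rw [abs_mul, abs_div, abs_of_pos hpos, abs_of_pos (by linarith : 0 < 1 - t)]
      have : (1 - t) * (|Real.cos (π * t)| / Real.sin (π * t)) * t
        = (1 - t) * |Real.cos (π * t)| * t / Real.sin (π * t) := by ring
      rw [this, div_le_iff₀ hpos]
      have h3 := Real.abs_cos_le_one (π * t)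
      have h4 : (1 - t) * t * |Real.cos (π * t)| ≤ (1 - t) * t * 1 :=
        mul_le_mul_of_nonneg_left h3 (by nlinarith)
      nlinarith
    have hsin : |Real.sin (c * t)| ≤ |c| * t := by
      have := Real.abs_sin_le_abs (x := c * t)
      rwa [abs_mul, abs_of_pos h0] at this
    have hsin1 := Real.abs_sin_le_one (c * t)
    set q := (1 - t) * (Real.cos (π * t) / Real.sin (π * t)) with hq
    have : 2 * (π⁻¹ + q) * Real.sin (c * t) = 2 * π⁻¹ * Real.sin (c * t) + 2 * (q * Real.sin (c * t)) := by ring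
    rw [this]
    refine (abs_add_le _ _).trans ?_
    have e1 : |2 * π⁻¹ * Real.sin (c * t)| ≤ 2 * π⁻¹ := by
      rw [abs_mul, abs_of_pos (by positivity : 0 < 2 * π⁻¹)]
      exact mul_le_of_le_one_right (by positivity) hsin1
    have e2 : |2 * (q * Real.sin (c * t))| ≤ |c| := by
      rw [abs_mul, abs_mul, abs_two]
      have : |q| * |Real.sin (c * t)| ≤ |q| * (|c| * t) := mul_le_mul_of_nonneg_left hsin (abs_nonneg _)
      have := mul_le_mul_of_nonneg_left hb (abs_nonneg c)
      nlinarith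
    linarith
  · simp; positivity

lemma gfun_meas : Measurable gfun := by
  unfold gfun
  refine Measurable.ite (measurableSet_lt (by fun_prop) (by fun_prop)) ?_ (by fun_prop)
  have : Measurable Real.sign := by
    unfold Real.sign
    exact Measurable.ite measurableSet_Iio (by fun_prop)
      (Measurable.ite measurableSet_Ioi (by fun_prop) (by fun_prop))
  fun_prop

lemma gfun_int (c : ℝ) : IntervalIntegrable (fun t => gfun t * Real.sin (c * t)) volume 0 1 := by
  rw [intervalIntegrable_iff_integrableOn_Ioc_of_le zero_le_one]
  refine Measure.integrableOn_of_bounded (M := 2 * π⁻¹ + |c|) (by simp) ?_ ?_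
  · exact (gfun_meas.mul (by fun_prop)).aestronglyMeasurable
  · filter_upwards [ae_restrict_mem measurableSet_Ioc] with t ht
    exact gfun_bound c ht.1 ht.2

lemma int_sin {y : ℝ} (hy : y ≠ 0) : ∫ t in (0:ℝ)..1, Real.sin (2 * π * y * t)
    = Real.sin (π * y) ^ 2 / (π * y) := by
  have hp := Real.pi_ne_zero
  rw [intervalIntegral.integral_comp_mul_left (fun t => Real.sin t) (by positivity), integral_sin,
    mul_one, mul_zero, Real.cos_zero, show 2 * π * y = 2 * (π * y) by ring, Real.cos_two_mul,
    Real.cos_sq', smul_eq_mul]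
  field_simp
  ring

lemma int_cos {y : ℝ} (hy : y ≠ 0) : ∫ t in (0:ℝ)..1, (1 - t) * Real.cos (2 * π * y * t)
    = Real.sin (π * y) ^ 2 / (2 * (π * y) ^ 2) := by
  have hp := Real.pi_ne_zero
  have hd : ∀ t ∈ Set.uIcc (0:ℝ) 1, HasDerivAt (fun t => (1 - t) * Real.sin (2 * π * y * t) / (2 * π * y)
      - Real.cos (2 * π * y * t) / (2 * π * y) ^ 2) ((1 - t) * Real.cos (2 * π * y * t)) t := by
    intro t _
    have h1 : HasDerivAt (fun t : ℝ => 2 * π * y * t) (2 * π * y) t := by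
      simpa using (hasDerivAt_id t).const_mul (2 * π * y)
    have h2 : HasDerivAt (fun t : ℝ => 1 - t) (-1) t := by
      simpa using (hasDerivAt_id t).const_sub 1
    refine (((h2.mul h1.sin).div_const (2 * π * y)).sub (h1.cos.div_const ((2 * π * y) ^ 2))).congr_deriv ?_
    have := mul_ne_zero (mul_ne_zero two_ne_zero hp) hy
    generalize 2 * π * y = c at this
    field_simp
    ring
  rw [intervalIntegral.integral_eq_sub_of_hasDerivAt hd
    (Continuous.intervalIntegrable (by fun_prop) _ _)]
  simp only [mul_one, mul_zero, Real.cos_zero, Real.sin_zero]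
  rw [show 2 * π * y = 2 * (π * y) by ring, Real.cos_two_mul, Real.cos_sq']
  field_simp
  ring

lemma GG_step (x : ℝ) : GG (x + 1) - GG x =
    2 * π⁻¹ * ((∫ t in (0:ℝ)..1, Real.sin (2 * π * (x + 1) * t)) - ∫ t in (0:ℝ)..1, Real.sin (2 * π * x * t))
    + 2 * ((∫ t in (0:ℝ)..1, (1 - t) * Real.cos (2 * π * (x + 1) * t))
      + ∫ t in (0:ℝ)..1, (1 - t) * Real.cos (2 * π * x * t)) := by
  have i1 : ∀ y : ℝ, IntervalIntegrable (fun t => Real.sin (2 * π * y * t)) volume 0 1 :=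
    fun y => Continuous.intervalIntegrable (by fun_prop) _ _
  have i2 : ∀ y : ℝ, IntervalIntegrable (fun t => (1 - t) * Real.cos (2 * π * y * t)) volume 0 1 :=
    fun y => Continuous.intervalIntegrable (by fun_prop) _ _
  unfold GG
  rw [← intervalIntegral.integral_sub (gfun_int _) (gfun_int _),
    ← intervalIntegral.integral_sub (i1 _) (i1 _),
    ← intervalIntegral.integral_add (i2 _) (i2 _), ← intervalIntegral.integral_const_mul,
    ← intervalIntegral.integral_const_mul, ← intervalIntegral.integral_add
      (((i1 _).sub (i1 _)).const_mul _) (((i2 _).add (i2 _)).const_mul _)]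
  refine intervalIntegral.integral_congr_Ioo_of_le zero_le_one ?_
  intro t ht
  have hs := sin_lower ht.1 ht.2
  have hpos : 0 < Real.sin (π * t) := lt_of_lt_of_le (by nlinarith [ht.1, ht.2]) hs
  simp only
  rw [gfun_eq ht.1 ht.2.le, if_pos ht.2]
  have e1 : 2 * π * (x + 1) * t = 2 * π * x * t + π * t + π * t := by ring
  have e2 : 2 * π * x * t = (2 * π * x * t + π * t) - π * t := by ring
  set c := 2 * π * x * t + π * t with hc
  clear_value c
  rw [e1, e2, Real.sin_add, Real.sin_sub, Real.cos_add, Real.cos_sub]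
  field_simp
  ring

lemma GG_step' {x : ℝ} (hx : 0 < x) : GG (x + 1) - GG x =
    (Real.sin (π * x) / π) ^ 2 * (1 / x - 1 / (x + 1)) ^ 2 := by
  have hp := Real.pi_ne_zero
  have h1 : x + 1 ≠ 0 := by positivity
  rw [GG_step, int_sin h1, int_sin hx.ne', int_cos h1, int_cos hx.ne']
  have : Real.sin (π * (x + 1)) = - Real.sin (π * x) := by
    rw [mul_add, mul_one, Real.sin_add_pi]
  rw [this]
  have := hx.ne'
  field_simp
  ring

lemma GG_nat (n : ℕ) : GG (n + 1) = 1 := by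
  have hp := Real.pi_ne_zero
  induction n with
  | zero =>
    have h := GG_step 0
    rw [zero_add, int_sin one_ne_zero, int_cos one_ne_zero] at h
    have h0 : GG 0 = 0 := by simp [GG]
    have h3 : ∫ t in (0:ℝ)..1, (1 - t) = 1 / 2 := by
      rw [intervalIntegral.integral_sub (by simp) (by simp)]
      simp; norm_num
    simp [h0] at h
    rw [h3] at h
    simpa using h
  | succ n ih =>
    have := GG_step' (x := n + 1) (by positivity)
    rw [ih] at this
    have hs : Real.sin (π * (n + 1)) = 0 := by
      have := Real.sin_nat_mul_pi (n + 1)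
      push_cast at this
      rwa [mul_comm]
    rw [hs] at this
    push_cast
    linarith [this, show (0 / π) ^ 2 * (1 / ((n:ℝ) + 1) - 1 / ((n:ℝ) + 1 + 1)) ^ 2 = 0 by simp]

lemma GG_lim (x : ℝ) : Tendsto (fun n : ℕ => GG (x + (n + 1))) atTop (nhds 1) := by
  set h : ℝ → ℝ := fun t => 2 * (gfun t * Real.sin (π * x * t)) with hh
  have hInteg : IntegrableOn h (Set.Ioc 0 1) := by
    rw [← intervalIntegrable_iff_integrableOn_Ioc_of_le zero_le_one]
    exact (gfun_int (π * x)).const_mul 2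
  have RL := Real.tendsto_integral_exp_smul_cocompact
    ((Set.Ioc (0:ℝ) 1).indicator (fun t => (h t : ℂ)))
  have hw : Tendsto (fun n : ℕ => (n:ℝ) + 1 + x / 2) atTop (cocompact ℝ) := by
    refine Tendsto.mono_right ?_ (atTop_le_cocompact)
    exact tendsto_atTop_add_const_right _ _ (tendsto_atTop_add_const_right _ _ tendsto_natCast_atTop_atTop)
  have RL2 := (Complex.continuous_re.tendsto _).comp (RL.comp hw)
  have key : ∀ n : ℕ, GG (x + (n + 1)) = 1 + (∫ v, Real.fourierChar (-(v * ((n:ℝ) + 1 + x / 2))) •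
      ((Set.Ioc (0:ℝ) 1).indicator (fun t => (h t : ℂ))) v).re := by
    intro n
    rw [← sub_eq_iff_eq_add']
    refine Eq.trans (congrArg (fun z => GG (x + (n + 1)) - z) (GG_nat n).symm) ?_
    have hind : (fun v => Real.fourierChar (-(v * ((n:ℝ) + 1 + x / 2))) •
        ((Set.Ioc (0:ℝ) 1).indicator (fun t => (h t : ℂ))) v) =
        (Set.Ioc (0:ℝ) 1).indicator (fun v => Real.fourierChar (-(v * ((n:ℝ) + 1 + x / 2))) • (h v : ℂ)) := by
      ext v
      by_cases hv : v ∈ Set.Ioc (0:ℝ) 1 <;> simp [hv]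
    have hIntegTwo : IntegrableOn (fun v => Real.fourierChar (-(v * ((n:ℝ) + 1 + x / 2))) • (h v : ℂ))
        (Set.Ioc 0 1) := by
      refine Integrable.mono (hInteg.ofReal (𝕜 := ℂ)) ?_ ?_
      · simp only [Circle.smul_def, smul_eq_mul]
        refine AEStronglyMeasurable.mul ?_ (hInteg.ofReal (𝕜 := ℂ)).aestronglyMeasurable
        exact Continuous.aestronglyMeasurable (by fun_prop)
      · filter_upwards with v
        rw [Circle.norm_smul]
        exact le_refl _
    rw [hind, integral_indicator measurableSet_Ioc]
    have hre := integral_re (𝕜 := ℂ) hIntegTwo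
    simp only [RCLike.re_eq_complex_re] at hre
    rw [← hre]
    unfold GG
    rw [← intervalIntegral.integral_sub (gfun_int _) (gfun_int _),
      intervalIntegral.integral_of_le zero_le_one]
    congr 1
    ext t
    rw [Circle.smul_def, smul_eq_mul, Complex.re_mul_ofReal, Real.fourierChar_apply,
      Complex.exp_ofReal_mul_I_re, ← mul_sub, Real.sin_sub_sin, hh]
    simp only
    rw [← Real.cos_neg (2 * π * -_)]
    rw [show (2 * π * (x + (↑n + 1)) * t - 2 * π * (↑n + 1) * t) / 2 = π * x * t by ring,
      show (2 * π * (x + (↑n + 1)) * t + 2 * π * (↑n + 1) * t) / 2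
        = -(2 * π * -(t * (↑n + 1 + x / 2))) by ring]
    ring
  simp only [key]
  simpa using RL2.const_add 1

/-- **Lemma 11** (Ivić–Korolev, after Tsang/Selberg). For every real `u` and `ω > 0`,
`sgn(u) = F_ω(u) + θK(ωu)` with `|θ| ≤ 1`. -/
theorem sgn_approx_by_Fom :
    ∀ u ω : ℝ, 0 < ω → |Real.sign u - Fom ω u| ≤ Kf (ω * u) := by
  have main : ∀ x : ℝ, 0 < x → |1 - GG x| ≤ Kf x := by
    intro x hx
    have hp := Real.pi_pos
    have hK : ∀ n : ℕ, Kf (x + n) = (Real.sin (π * x) / π) ^ 2 * (1 / (x + n)) ^ 2 := by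
      intro n
      have h0 : x + n ≠ 0 := by positivity
      have : Real.sin (π * (x + n)) ^ 2 = Real.sin (π * x) ^ 2 := by
        rw [mul_add, mul_comm π (n:ℝ), Real.sin_add_nat_mul_pi, mul_pow, ← pow_mul, mul_comm n 2, pow_mul]
        simp
      rw [Kf, if_neg h0, div_pow, this]
      field_simp
    have hG := GG_lim x
    have hG : Tendsto (fun n : ℕ => GG (x + n)) atTop (nhds 1) := by
      rw [← tendsto_add_atTop_iff_nat 1]
      simpa using hG
    have hKl : Tendsto (fun n : ℕ => Kf (x + n)) atTop (nhds 0) := by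
      simp only [hK]
      have : Tendsto (fun n : ℕ => 1 / (x + (n:ℝ))) atTop (nhds 0) := by
        simp only [one_div]
        exact tendsto_inv_atTop_zero.comp (tendsto_atTop_add_const_left _ _ tendsto_natCast_atTop_atTop)
      simpa using (this.pow 2).const_mul ((Real.sin (π * x) / π) ^ 2)
    have hstep : ∀ n : ℕ, GG (x + (n + 1 : ℕ)) - GG (x + n) =
        (Real.sin (π * x) / π) ^ 2 * (1 / (x + n) - 1 / (x + (n + 1 : ℕ))) ^ 2 := by
      intro n
      have := GG_step' (x := x + n) (by positivity)
      have h2 : Real.sin (π * (x + n)) ^ 2 = Real.sin (π * x) ^ 2 := by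
        rw [mul_add, mul_comm π (n:ℝ), Real.sin_add_nat_mul_pi, mul_pow, ← pow_mul, mul_comm n 2, pow_mul]
        simp
      rw [div_pow, h2, ← div_pow] at this
      push_cast
      rw [← add_assoc, this]
    have m1 : Monotone (fun n : ℕ => GG (x + n)) := by
      refine monotone_nat_of_le_succ fun n => ?_
      have := hstep n
      have : 0 ≤ GG (x + (n + 1 : ℕ)) - GG (x + n) := by rw [this]; positivity
      linarith
    have m2 : Antitone (fun n : ℕ => GG (x + n) + Kf (x + n)) := by
      refine antitone_nat_of_succ_le fun n => ?_
      have h1 := hstep n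
      rw [hK, hK]
      set a := 1 / (x + (n:ℝ))
      set b := 1 / (x + ((n + 1 : ℕ) : ℝ)) with hb
      have hb0 : 0 ≤ b := by positivity
      have hab : b ≤ a := one_div_le_one_div_of_le (by positivity) (by push_cast; linarith)
      have : (Real.sin (π * x) / π) ^ 2 * (a - b) ^ 2 ≤ (Real.sin (π * x) / π) ^ 2 * (a ^ 2 - b ^ 2) :=
        mul_le_mul_of_nonneg_left (by nlinarith) (by positivity)
      linarith
    have u1 := m1.ge_of_tendsto hG 0
    have u2 := m2.le_of_tendsto (by simpa using hG.add hKl) 0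
    simp at u1 u2
    rw [abs_le]
    constructor <;> nlinarith [abs_nonneg (1 - GG x)]
  have Kneg : ∀ x, Kf (-x) = Kf x := by
    intro x
    simp [Kf]
  intro u ω hω
  rw [Fom_eq ω u hω]
  rcases lt_trichotomy u 0 with h | h | h
  · rw [Real.sign_of_neg h]
    have := main (-(ω * u)) (by nlinarith)
    rw [GG_neg, Kneg, ← abs_neg] at this
    convert this using 2
    ring
  · subst h
    simp [GG, Kf]
  · rw [Real.sign_of_pos h]
    exact main _ (by positivity)
end
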